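/- Let [a_1,…,a_r] and [b_1,…,b_s] be conjugate strings, and let c ≥ 2 be an integer such that the concatenated string [a_r,…,a_1, c, b_1,…,b_s] is a string of type T. Then this string is Du Val, i.e. c = 2 and all a_i and all b_j equal 2. -/

import Mathlib

/-- Hirzebruch–Jung continued fraction value of a list:
`hjValue [a₁, …, a_r] = a₁ - 1/(a₂ - 1/(⋯ - 1/a_r))`.
(For the empty list the value is `0`, and since `1/0 = 0` in `ℚ`,
`hjValue [a] = a`.) -/
def hjValue : List ℤ → ℚ
  | [] => 0
  | a :: l => (a : ℚ) - 1 / hjValue l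

/-- A *string* is a nonempty finite sequence of integers, all `≥ 2`. -/
def IsString (l : List ℤ) : Prop := l ≠ [] ∧ ∀ x ∈ l, 2 ≤ x

/-- Two strings are *conjugate* if their values are `m/q` and `m/(m-q)`
for some coprime integers `m > q ≥ 1`. -/
def IsConjugate (a b : List ℤ) : Prop :=
  ∃ m q : ℕ, 1 ≤ q ∧ q < m ∧ Nat.Coprime m q ∧
    hjValue a = (m : ℚ) / q ∧ hjValue b = (m : ℚ) / ((m : ℚ) - q)

/-- A string is of *type T* if its value, written in lowest terms `n/q` with
coprime `n > q ≥ 1`, satisfies `n ∣ (q+1)²`. -/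
def IsTString (l : List ℤ) : Prop :=
  IsString l ∧ ∃ n q : ℕ, 1 ≤ q ∧ q < n ∧ Nat.Coprime n q ∧
    hjValue l = (n : ℚ) / q ∧ n ∣ (q + 1) ^ 2

/-- A string is *Du Val* if all its entries equal `2`. -/
def IsDuVal (l : List ℤ) : Prop := ∀ x ∈ l, x = 2

/-- Numerator and denominator of the Hirzebruch–Jung continued fraction of a list, computed by the
continuant recursion. -/
def hjPair : List ℤ → ℤ × ℤ
  | [] => (1, 0)
  | a :: l => (a * (hjPair l).1 - (hjPair l).2, (hjPair l).1)

theorem hjPair_isCoprime (l : List ℤ) : IsCoprime (hjPair l).1 (hjPair l).2 := by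
  induction l with
  | nil => exact isCoprime_one_left
  | cons x l ih =>
    obtain ⟨u, v, h⟩ := ih
    exact ⟨-v, u + v * x, by simp only [hjPair]; linear_combination h⟩

theorem hjPair_bounds {l : List ℤ} (hl : ∀ x ∈ l, 2 ≤ x) :
    0 ≤ (hjPair l).2 ∧ (hjPair l).2 < (hjPair l).1 := by
  induction l with
  | nil => simp [hjPair]
  | cons x l ih =>
    obtain ⟨h0, h1⟩ := ih fun y hy => hl y (List.mem_cons_of_mem _ hy)
    have hx := hl x List.mem_cons_self
    simp only [hjPair]
    constructor
    · omega
    · nlinarith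

theorem hjPair_snd_pos {l : List ℤ} (hl : IsString l) : 0 < (hjPair l).2 := by
  obtain ⟨hne, h⟩ := hl
  cases l with
  | nil => exact absurd rfl hne
  | cons x l =>
    have := hjPair_bounds fun y hy => h y (List.mem_cons_of_mem _ hy)
    simp only [hjPair]
    omega

theorem hjValue_eq_hjPair_div {l : List ℤ} (hl : ∀ x ∈ l, 2 ≤ x) :
    hjValue l = (hjPair l).1 / (hjPair l).2 := by
  induction l with
  | nil => simp [hjValue, hjPair]
  | cons x l ih =>
    have hl' : ∀ y ∈ l, 2 ≤ y := fun y hy => hl y (List.mem_cons_of_mem _ hy)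
    have hb := hjPair_bounds hl'
    have hn : ((hjPair l).1 : ℚ) ≠ 0 := by
      have : (hjPair l).1 ≠ 0 := by omega
      exact_mod_cast this
    rw [hjValue, ih hl']
    simp only [hjPair]
    push_cast
    rw [one_div_div]
    field_simp

/-- The continuants of a string are determined by its value in lowest terms. -/
theorem hjPair_eq_of_hjValue_eq {l : List ℤ} (hl : IsString l) {n q : ℤ} (hq : 0 < q)
    (hco : IsCoprime n q) (h : hjValue l = (n : ℚ) / q) : hjPair l = (n, q) := by
  rw [hjValue_eq_hjPair_div hl.2] at h
  obtain ⟨h1, h2⟩ := Rat.div_int_inj (hjPair_snd_pos hl) hq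
    (Int.isCoprime_iff_gcd_eq_one.mp (hjPair_isCoprime l))
    (Int.isCoprime_iff_gcd_eq_one.mp hco) h
  exact Prod.ext h1 h2

/-- Prepending a reversed list acts on continuants by a matrix of determinant one whose first row
is given by the continuants of the list. -/
theorem exists_hjPair_reverse_append (l : List ℤ) :
    ∃ n' d' : ℤ, n' * (hjPair l).2 - (hjPair l).1 * d' = 1 ∧
      ∀ t : List ℤ, hjPair (l.reverse ++ t) =
        ((hjPair l).1 * (hjPair t).1 - (hjPair l).2 * (hjPair t).2,
          n' * (hjPair t).1 - d' * (hjPair t).2) := by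
  induction l with
  | nil => exact ⟨0, -1, by simp [hjPair], fun t => by simp [hjPair]⟩
  | cons x l ih =>
    obtain ⟨n', d', hdet, h⟩ := ih
    refine ⟨n' * x - d', n', ?_, fun t => ?_⟩
    · simp only [hjPair]
      linear_combination hdet
    · rw [List.reverse_cons, List.append_assoc, List.singleton_append, h]
      simp only [hjPair, Prod.mk.injEq]
      constructor <;> ring

theorem eq_singleton_two_of_hjPair_eq {l : List ℤ} (hl : IsString l) (h : hjPair l = (2, 1)) :
    l = [2] := by
  obtain ⟨hne, hge⟩ := hl
  cases l with
  | nil => exact absurd rfl hne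
  | cons x l =>
    have hl' : ∀ y ∈ l, 2 ≤ y := fun y hy => hge y (List.mem_cons_of_mem _ hy)
    have hb := hjPair_bounds hl'
    simp only [hjPair, Prod.mk.injEq] at h
    obtain ⟨h1, h2⟩ := h
    rw [h2] at h1
    cases l with
    | nil =>
      simp only [hjPair] at h1
      rw [show x = 2 by omega]
    | cons y l =>
      have := hjPair_snd_pos ⟨List.cons_ne_nil y l, hl'⟩
      omega

theorem eq_two_and_eq_one_of_sq_mul_dvd {m e k : ℤ} (hm : 2 ≤ m) (he : 1 ≤ e)
    (h : m ^ 2 * e ∣ (k * m * e + 2) ^ 2) : m = 2 ∧ e = 1 := by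
  obtain ⟨s, hs⟩ := h
  have hm4 : m ∣ 4 := ⟨m * e * s - k ^ 2 * m * e ^ 2 - 4 * k * e, by linear_combination hs⟩
  have hle : m ≤ 4 := Int.le_of_dvd (by norm_num) hm4
  have hcases : m = 2 ∨ m = 4 := by
    interval_cases m <;> omega
  rcases hcases with rfl | rfl
  · refine ⟨rfl, le_antisymm (Int.le_of_dvd one_pos ?_) he⟩
    exact ⟨s - k ^ 2 * e - 2 * k, by linarith⟩
  · have hodd : 1 = 2 * (2 * e * s - 2 * k ^ 2 * e ^ 2 - 2 * (k * e)) := by linarith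
    omega

/-- If `[a₁,…,a_r]` and `[b₁,…,b_s]` are conjugate strings, `c ≥ 2`, and the
concatenated string `[a_r,…,a₁, c, b₁,…,b_s]` is of type T, then it is
Du Val: `c = 2` and all `aᵢ` and all `bⱼ` equal `2`. -/
theorem tString_of_conjugate_glue_isDuVal (a b : List ℤ) (c : ℤ)
    (ha : IsString a) (hb : IsString b) (hc : 2 ≤ c)
    (hconj : IsConjugate a b) (hT : IsTString (a.reverse ++ c :: b)) :
    c = 2 ∧ (∀ x ∈ a, x = 2) ∧ (∀ x ∈ b, x = 2) := by
  obtain ⟨m, q, hq, hqm, hco, hva, hvb⟩ := hconj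
  obtain ⟨hS, N, Q, hQ, -, hNQ, hv, hdvd⟩ := hT
  have hcoZ : IsCoprime (m : ℤ) q := Nat.isCoprime_iff_coprime.mpr hco
  have hpa : hjPair a = ((m : ℤ), (q : ℤ)) :=
    hjPair_eq_of_hjValue_eq ha (by omega) hcoZ (by simpa using hva)
  have hpb : hjPair b = ((m : ℤ), (m : ℤ) - q) := by
    refine hjPair_eq_of_hjValue_eq hb (by omega) ?_ (by rw [hvb]; push_cast; rfl)
    obtain ⟨u, v, huv⟩ := hcoZ
    exact ⟨u + v, -v, by linear_combination huv⟩
  have hp : hjPair (a.reverse ++ c :: b) = ((N : ℤ), (Q : ℤ)) :=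
    hjPair_eq_of_hjValue_eq hS (by omega) (Nat.isCoprime_iff_coprime.mpr hNQ)
      (by simpa using hv)
  obtain ⟨n', d', hdet, hrev⟩ := exists_hjPair_reverse_append a
  rw [hrev] at hp
  simp only [hjPair, hpa, hpb, Prod.mk.injEq] at hp hdet
  obtain ⟨hN, hQ'⟩ := hp
  have hdvdZ : (N : ℤ) ∣ ((Q : ℤ) + 1) ^ 2 := by exact_mod_cast hdvd
  have hNeq : (N : ℤ) = (m : ℤ) ^ 2 * (c - 1) := by linear_combination -hN
  have hQeq : (Q : ℤ) + 1 = n' * m * (c - 1) + 2 := by linear_combination hdet - hQ'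
  rw [hNeq, hQeq] at hdvdZ
  obtain ⟨hm2, hc1⟩ := eq_two_and_eq_one_of_sq_mul_dvd (by omega) (by omega) hdvdZ
  have hq1 : (q : ℤ) = 1 := by omega
  rw [hm2, hq1] at hpa hpb
  rw [eq_singleton_two_of_hjPair_eq ha hpa, eq_singleton_two_of_hjPair_eq hb hpb]
  exact ⟨by omega, by simp, by simp⟩
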